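/- If (T, f) solves the Duffing boundary value problem for (m, β), then ∫_{-T}^{T} f(t) dt = 2√2 · arcsin(k), where k = √((1 + β/√(2m² + β²))/2). -/

import Mathlib

open Real

/-- The Duffing boundary value problem for `(m, β)`: a time `T > 0` and a `C^∞` function
`f` with `f'' = -f³ + β·f` on `[-T, T]`, boundary values `f(±T) = 0`,
`f'(-T) = m`, `f'(T) = -m`, and `f > 0` on `(-T, T)`. -/
def IsDuffingSolution (m : ℕ) (β T : ℝ) (f : ℝ → ℝ) : Prop :=
  0 < T ∧ ContDiff ℝ (⊤ : ℕ∞) f ∧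
    (∀ t ∈ Set.Icc (-T) T, deriv (deriv f) t = -(f t) ^ 3 + β * f t) ∧
    f (-T) = 0 ∧ f T = 0 ∧ deriv f (-T) = (m : ℝ) ∧ deriv f T = -(m : ℝ) ∧
    (∀ t ∈ Set.Ioo (-T) T, 0 < f t)


/-- The elliptic modulus `k = √((1 + β/√(2m² + β²))/2)` associated to `(m, β)`. -/
noncomputable def duffingModulus (m : ℕ) (β : ℝ) : ℝ :=
  Real.sqrt ((1 + β / Real.sqrt (2 * (m : ℝ) ^ 2 + β ^ 2)) / 2)

/-!
The curve `z = (f² - β) + √2 f' i` solves the linear equation `z' = -√2 f i z`, so it only rotates: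
`z(t) = exp(-θ(t) i) z(a)` with `θ(t) = √2 ∫_a^t f`. Comparing real parts on a positive arch, where
`f(a) = 0`, gives `f² = ‖z(a)‖ (cos(θ - ψ) - cos ψ)` with `ψ = arg z(a)`. Hence the zero of `f` at
the end of the arch is reached exactly when `θ - ψ` has increased from `-ψ` to `ψ`, so that
`√2 ∫ f = 2ψ`; the half-angle formula turns `ψ` into `2 arcsin k`.
-/

open Set

theorem arg_eq_two_mul_arcsin_sqrt {z : ℂ} (hz : z ≠ 0) (him : 0 ≤ z.im) :
    z.arg = 2 * arcsin √((1 - z.re / ‖z‖) / 2) := by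
  have harg : 0 ≤ z.arg := Complex.arg_nonneg_iff.2 him
  have hpi : z.arg ≤ π := z.arg_le_pi
  rw [← Complex.cos_arg hz, ← sin_half_eq_sqrt harg (by linarith), arcsin_sin] <;> linarith

theorem re_cexp_mul_I_mul (θ : ℝ) (z : ℂ) :
    (Complex.exp (θ * Complex.I) * z).re = ‖z‖ * cos (θ + z.arg) := by
  rw [Complex.mul_re, Complex.exp_ofReal_mul_I_re, Complex.exp_ofReal_mul_I_im, cos_add,
    ← z.norm_mul_cos_arg, ← z.norm_mul_sin_arg]
  ring

theorem eq_cexp_smul_of_hasDerivWithinAt {E : Type*} [NormedAddCommGroup E] [NormedSpace ℂ E]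
    {z : ℝ → E} {A c : ℝ → ℂ} {a b : ℝ}
    (hz : ∀ t ∈ Icc a b, HasDerivWithinAt z (c t • z t) (Icc a b) t)
    (hA : ∀ t ∈ Icc a b, HasDerivWithinAt A (c t) (Icc a b) t) {t : ℝ} (ht : t ∈ Icc a b) :
    z t = Complex.exp (A t - A a) • z a := by
  have hderiv : ∀ s ∈ Icc a b,
      HasDerivWithinAt (fun s ↦ Complex.exp (-A s) • z s) 0 (Icc a b) s := fun s hs ↦ by
    refine ((hA s hs).fun_neg.cexp.smul (hz s hs)).congr_deriv ?_
    rw [smul_smul, ← add_smul, mul_neg, add_neg_cancel, zero_smul]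
  have hconst : Complex.exp (-A t) • z t = Complex.exp (-A a) • z a :=
    constant_of_derivWithin_zero (fun s hs ↦ (hderiv s hs).differentiableWithinAt)
      (fun s hs ↦ (hderiv s (Ico_subset_Icc_self hs)).derivWithin
        (uniqueDiffOn_Icc (hs.1.trans_lt hs.2) s (Ico_subset_Icc_self hs))) t ht
  rw [sub_eq_add_neg, Complex.exp_add, mul_smul, ← hconst, smul_smul, ← Complex.exp_add,
    add_neg_cancel, Complex.exp_zero, one_smul]

theorem hasDerivWithinAt_integral_Icc {E : Type*} [NormedAddCommGroup E] [NormedSpace ℝ E]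
    [CompleteSpace E] {f : ℝ → E} {a b : ℝ} (hf : ContinuousOn f (Icc a b)) {t : ℝ}
    (ht : t ∈ Icc a b) :
    HasDerivWithinAt (fun u ↦ ∫ s in a..u, f s) (f t) (Icc a b) t := by
  have : Fact (t ∈ Icc a b) := ⟨ht⟩
  exact intervalIntegral.integral_hasDerivWithinAt_right
    ((hf.mono (Icc_subset_Icc_right ht.2)).intervalIntegrable_of_Icc ht.1)
    (hf.stronglyMeasurableAtFilter_nhdsWithin measurableSet_Icc t) (hf t ht)

theorem nonneg_of_hasDerivWithinAt_of_isMinOn_left {f : ℝ → ℝ} {f' a b : ℝ} (hab : a < b)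
    (hf : HasDerivWithinAt f f' (Icc a b) a) (hmin : IsMinOn f (Icc a b) a) : 0 ≤ f' := by
  have hdir : b - a ∈ posTangentConeAt (Icc a b) a :=
    sub_mem_posTangentConeAt_of_segment_subset (segment_eq_Icc hab.le).subset
  have hmul : 0 ≤ (b - a) * f' := by
    simpa using hmin.localize.hasFDerivWithinAt_nonneg hf.hasFDerivWithinAt hdir
  exact nonneg_of_mul_nonneg_right hmul (sub_pos.2 hab)

theorem eq_of_forall_Ioo_cos_lt_cos {δ : ℝ → ℝ} {a b ψ : ℝ} (hab : a < b)
    (hδ : ContinuousOn δ (Icc a b)) (hψ : ψ ∈ Icc 0 π) (ha : δ a = -ψ) (hb : -ψ < δ b)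
    (hcos : ∀ t ∈ Ioo a b, cos ψ < cos (δ t)) (hcosb : cos (δ b) = cos ψ) : δ b = ψ := by
  have hψ_pos : 0 < ψ := hψ.1.lt_of_ne fun h ↦ by
    obtain ⟨t, ht⟩ := nonempty_Ioo.2 hab
    have hlt := hcos t ht
    rw [← h, cos_zero] at hlt
    exact hlt.not_ge (cos_le_one _)
  have hle : δ b ≤ ψ := by
    by_contra! hlt
    obtain ⟨t, ht, hδt⟩ := intermediate_value_Ioo hab.le hδ ⟨by linarith, hlt⟩
    exact (hcos t ht).ne (by rw [hδt])
  have habs : |δ b| ≤ ψ := abs_le.2 ⟨hb.le, hle⟩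
  have habs_eq : |δ b| = ψ :=
    injOn_cos ⟨abs_nonneg _, habs.trans hψ.2⟩ hψ (by rw [cos_abs, hcosb])
  exact (eq_or_eq_neg_of_abs_eq habs_eq).resolve_right hb.ne'

/-- The point `(x² - β) + √2 y i` of the plane attached to the state `(f, f') = (x, y)` of the
Duffing oscillator. The squared modulus `(x² - β)² + 2y²` is a first integral of the equation. -/
noncomputable def duffingPhase (β x y : ℝ) : ℂ := ⟨x ^ 2 - β, √2 * y⟩

theorem norm_duffingPhase (β x y : ℝ) :
    ‖duffingPhase β x y‖ = √(2 * y ^ 2 + (x ^ 2 - β) ^ 2) := by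
  rw [Complex.norm_eq_sqrt_sq_add_sq, duffingPhase, mul_pow, sq_sqrt zero_le_two, add_comm]

theorem arg_duffingPhase_zero {β y : ℝ} (hne : duffingPhase β 0 y ≠ 0) (hy : 0 ≤ y) :
    (duffingPhase β 0 y).arg = 2 * arcsin √((1 + β / √(2 * y ^ 2 + β ^ 2)) / 2) := by
  have hre : (duffingPhase β 0 y).re = -β := by simp [duffingPhase]
  have hnorm : ‖duffingPhase β 0 y‖ = √(2 * y ^ 2 + β ^ 2) := by simp [norm_duffingPhase]
  rw [arg_eq_two_mul_arcsin_sqrt hne (mul_nonneg (sqrt_nonneg 2) hy), hre, hnorm, neg_div,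
    sub_neg_eq_add]

/-- The pair `(f, g)` is a solution on `s` of the first-order system `f' = g`, `g' = -f³ + β f`
equivalent to the Duffing equation; derivatives are taken within `s`, hence are one-sided at the
endpoints of an interval. -/
structure IsDuffingTrajectory (β : ℝ) (f g : ℝ → ℝ) (s : Set ℝ) : Prop where
  hasDerivWithinAt_fst : ∀ t ∈ s, HasDerivWithinAt f (g t) s t
  hasDerivWithinAt_snd : ∀ t ∈ s, HasDerivWithinAt g (-(f t) ^ 3 + β * f t) s t

theorem IsDuffingSolution.isDuffingTrajectory {m : ℕ} {β T : ℝ} {f : ℝ → ℝ}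
    (h : IsDuffingSolution m β T f) : IsDuffingTrajectory β f (deriv f) (Icc (-T) T) := by
  obtain ⟨-, hf, hode, -⟩ := h
  obtain ⟨hdiff, hf'⟩ := contDiff_infty_iff_deriv.1 hf
  refine ⟨fun t _ ↦ (hdiff t).hasDerivAt.hasDerivWithinAt, fun t ht ↦ ?_⟩
  rw [← hode t ht]
  exact (hf'.differentiable (by simp) t).hasDerivAt.hasDerivWithinAt

namespace IsDuffingTrajectory

variable {β a b t : ℝ} {f g : ℝ → ℝ} {s : Set ℝ}

theorem continuousOn (h : IsDuffingTrajectory β f g s) : ContinuousOn f s :=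
  fun t ht ↦ (h.hasDerivWithinAt_fst t ht).continuousWithinAt

theorem hasDerivWithinAt_duffingPhase (h : IsDuffingTrajectory β f g s) (ht : t ∈ s) :
    HasDerivWithinAt (fun t ↦ duffingPhase β (f t) (g t))
      (-(√2 * f t : ℝ) * Complex.I * duffingPhase β (f t) (g t)) s t := by
  have hre : HasDerivWithinAt (fun t ↦ f t ^ 2 - β) (√2 * √2 * f t * g t) s t := by
    refine (((h.hasDerivWithinAt_fst t ht).pow 2).sub_const β).congr_deriv ?_
    norm_num
  have him : HasDerivWithinAt (fun t ↦ √2 * g t) (√2 * (-(f t) ^ 3 + β * f t)) s t :=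
    (h.hasDerivWithinAt_snd t ht).const_mul √2
  simp only [duffingPhase, Complex.mk_eq_add_mul_I]
  refine (hre.ofReal_comp.add (him.ofReal_comp.mul_const Complex.I)).congr_deriv ?_
  push_cast
  linear_combination ((√2 : ℂ) * √2 * f t * g t) * Complex.I_mul_I

theorem hasDerivWithinAt_sqrt_two_mul_integral (h : IsDuffingTrajectory β f g (Icc a b))
    (ht : t ∈ Icc a b) :
    HasDerivWithinAt (fun t ↦ √2 * ∫ u in a..t, f u) (√2 * f t) (Icc a b) t :=
  (hasDerivWithinAt_integral_Icc h.continuousOn ht).const_mul √2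

theorem duffingPhase_eq_cexp_mul (h : IsDuffingTrajectory β f g (Icc a b)) (ht : t ∈ Icc a b) :
    duffingPhase β (f t) (g t) =
      Complex.exp (-(√2 * ∫ u in a..t, f u : ℝ) * Complex.I) * duffingPhase β (f a) (g a) := by
  simpa using eq_cexp_smul_of_hasDerivWithinAt
    (fun _ hu ↦ h.hasDerivWithinAt_duffingPhase hu)
    (fun _ hu ↦
      (h.hasDerivWithinAt_sqrt_two_mul_integral hu).ofReal_comp.fun_neg.mul_const Complex.I) ht

theorem sq_sub_eq (h : IsDuffingTrajectory β f g (Icc a b)) (ht : t ∈ Icc a b) :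
    f t ^ 2 - β = ‖duffingPhase β (f a) (g a)‖ *
      cos ((√2 * ∫ u in a..t, f u) - (duffingPhase β (f a) (g a)).arg) := by
  have hre := congrArg Complex.re (h.duffingPhase_eq_cexp_mul ht)
  rw [← Complex.ofReal_neg, re_cexp_mul_I_mul, neg_add_eq_sub, ← neg_sub, cos_neg] at hre
  exact hre

theorem sq_eq_of_left_eq_zero (h : IsDuffingTrajectory β f g (Icc a b)) (ha : f a = 0)
    (ht : t ∈ Icc a b) :
    f t ^ 2 = ‖duffingPhase β 0 (g a)‖ *
      (cos ((√2 * ∫ u in a..t, f u) - (duffingPhase β 0 (g a)).arg)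
        - cos (duffingPhase β 0 (g a)).arg) := by
  have hre : -β = ‖duffingPhase β 0 (g a)‖ * cos (duffingPhase β 0 (g a)).arg := by
    simp [duffingPhase]
  have hsq := h.sq_sub_eq ht
  rw [ha] at hsq
  linear_combination hsq - hre

theorem duffingPhase_ne_zero (h : IsDuffingTrajectory β f g (Icc a b)) (ha : f a = 0)
    (ht : t ∈ Icc a b) (hft : f t ≠ 0) : duffingPhase β 0 (g a) ≠ 0 := fun hzero ↦ by
  have hsq := h.sq_eq_of_left_eq_zero ha ht
  rw [hzero, norm_zero, zero_mul] at hsq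
  exact hft (eq_zero_of_pow_eq_zero hsq)

theorem slope_nonneg (h : IsDuffingTrajectory β f g (Icc a b)) (hab : a < b) (ha : f a = 0)
    (hb : f b = 0) (hpos : ∀ t ∈ Ioo a b, 0 < f t) : 0 ≤ g a := by
  have hmin : IsMinOn f (Icc a b) a := isMinOn_iff.2 fun t ht ↦ by
    rcases eq_endpoints_or_mem_Ioo_of_mem_Icc ht with rfl | rfl | ht
    · exact le_rfl
    · exact (ha.trans hb.symm).le
    · exact ha.trans_le (hpos t ht).le
  exact nonneg_of_hasDerivWithinAt_of_isMinOn_left hab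
    (h.hasDerivWithinAt_fst a (left_mem_Icc.2 hab.le)) hmin

theorem sqrt_two_mul_integral_eq (h : IsDuffingTrajectory β f g (Icc a b)) (hab : a < b)
    (ha : f a = 0) (hb : f b = 0) (hpos : ∀ t ∈ Ioo a b, 0 < f t) :
    √2 * ∫ t in a..b, f t = 2 * (duffingPhase β 0 (g a)).arg := by
  set z := duffingPhase β 0 (g a)
  have hz : 0 < ‖z‖ := by
    obtain ⟨t, ht⟩ := nonempty_Ioo.2 hab
    exact norm_pos_iff.2 (h.duffingPhase_ne_zero ha (Ioo_subset_Icc_self ht) (hpos t ht).ne')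
  have hint : 0 < ∫ t in a..b, f t :=
    intervalIntegral.intervalIntegral_pos_of_pos_on
      (h.continuousOn.intervalIntegrable_of_Icc hab.le) hpos hab
  have hcont : ContinuousOn (fun t ↦ (√2 * ∫ u in a..t, f u) - z.arg) (Icc a b) :=
    fun t ht ↦ ((h.hasDerivWithinAt_sqrt_two_mul_integral ht).sub_const z.arg).continuousWithinAt
  have hsq : ∀ t ∈ Icc a b,
      f t ^ 2 = ‖z‖ * (cos ((√2 * ∫ u in a..t, f u) - z.arg) - cos z.arg) :=
    fun t ht ↦ h.sq_eq_of_left_eq_zero ha ht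
  have hcos : ∀ t ∈ Ioo a b, cos z.arg < cos ((√2 * ∫ u in a..t, f u) - z.arg) := fun t ht ↦ by
    have hft : 0 < f t ^ 2 := pow_pos (hpos t ht) 2
    rw [hsq t (Ioo_subset_Icc_self ht)] at hft
    exact sub_pos.1 (pos_of_mul_pos_right hft hz.le)
  have hcosb : cos ((√2 * ∫ u in a..b, f u) - z.arg) = cos z.arg := by
    have hfb := hsq b (right_mem_Icc.2 hab.le)
    rw [hb, zero_pow two_ne_zero] at hfb
    exact sub_eq_zero.1 ((mul_eq_zero.1 hfb.symm).resolve_left hz.ne')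
  have harg : z.arg ∈ Icc 0 π :=
    ⟨Complex.arg_nonneg_iff.2 (mul_nonneg (sqrt_nonneg 2) (h.slope_nonneg hab ha hb hpos)),
      z.arg_le_pi⟩
  have hturn := eq_of_forall_Ioo_cos_lt_cos hab hcont harg (by simp)
    (by linarith [mul_pos (sqrt_pos.2 two_pos) hint]) hcos hcosb
  linear_combination hturn

end IsDuffingTrajectory

theorem duffing_integral_f_general {β a b : ℝ} {f g : ℝ → ℝ}
    (h : IsDuffingTrajectory β f g (Icc a b)) (hab : a < b) (ha : f a = 0) (hb : f b = 0)
    (hpos : ∀ t ∈ Ioo a b, 0 < f t) :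
    ∫ t in a..b, f t = 2 * √2 * arcsin √((1 + β / √(2 * g a ^ 2 + β ^ 2)) / 2) := by
  obtain ⟨t, ht⟩ := nonempty_Ioo.2 hab
  have hne : duffingPhase β 0 (g a) ≠ 0 :=
    h.duffingPhase_ne_zero ha (Ioo_subset_Icc_self ht) (hpos t ht).ne'
  have htotal := h.sqrt_two_mul_integral_eq hab ha hb hpos
  rw [arg_duffingPhase_zero hne (h.slope_nonneg hab ha hb hpos)] at htotal
  linear_combination (√2 / 2) * htotal -
    (∫ t in a..b, f t) / 2 * mul_self_sqrt (zero_le_two (α := ℝ))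

/-- `∫_{-T}^{T} f = 2√2 · arcsin k`. -/
theorem duffing_integral_f (m : ℕ) (hm : 0 < m) (β T : ℝ) (f : ℝ → ℝ)
    (h : IsDuffingSolution m β T f) :
    (∫ t in (-T)..T, f t) = 2 * Real.sqrt 2 * Real.arcsin (duffingModulus m β) := by
  have htraj := h.isDuffingTrajectory
  obtain ⟨hT, -, -, hl, hr, hslope, -, hpos⟩ := h
  rw [duffing_integral_f_general htraj (by linarith) hl hr hpos, hslope, duffingModulus]
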